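/- arXiv:1504.00233 — 2 statements merged into one kernel-verified Lean document; each statement's English description precedes it below -/
import Mathlib

section
/- Joint convexity of the Umegaki relative entropy: for n×n positive definite complex matrices ρ, σ define D(ρ‖σ) = Re tr(ρ·(log ρ − log σ)). Then for positive definite ρ₁, ρ₂, σ₁, σ₂ and λ ∈ [0,1], D(λρ₁+(1−λ)ρ₂ ‖ λσ₁+(1−λ)σ₂) ≤ λ·D(ρ₁‖σ₁) + (1−λ)·D(ρ₂‖σ₂). -/
/-!
The proof linearises the logarithm by an integral and the resulting resolvents by a variational
formula. Writing `ρ = U diag(r) Uᴴ`, `σ = V diag(s) Vᴴ` and `w i j = |(Uᴴ V) i j|²`, one has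
`D(ρ‖σ) = ∑ w i j * r i * (log (r i) - log (s j))`. Let

  `F_t(ρ, σ) = ∑ w i j * (r i)² / (s j + t * r i)`,

which is the quadratic form `⟨ρ, (L_σ + t R_ρ)⁻¹ ρ⟩` for left multiplication `L_σ` and right
multiplication `R_ρ` on the Hilbert–Schmidt space. Completing the square shows that `F_t(ρ, σ)` is
the maximum over all matrices `Y` of `2 Re tr(ρY) - Re tr(YᴴσY) - t Re tr(YρYᴴ)`
(`isGreatest_quad`). This expression is linear in `(ρ, σ)`, so `F_t` is jointly convex. Finally
`∫₀ᵀ F_t dt - log (1 + T) tr ρ` tends to `D(ρ‖σ)` as `T → ∞` (`exists_primitive`), and convexity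
passes to the integral and to the limit.
-/

open Matrix
open scoped ComplexOrder

/-- Matrix logarithm via the spectral decomposition (junk value `0` if the matrix is
not Hermitian); eigenvalue `0` is sent to `0` by the convention `log 0 = 0`. -/
noncomputable def mlog {d : Type*} [Fintype d] [DecidableEq d]
    (M : Matrix d d ℂ) : Matrix d d ℂ :=
  if hM : M.IsHermitian then hM.cfc Real.log else 0

/-- The Umegaki relative entropy `D(ρ‖σ) = Re tr (ρ (log ρ - log σ))`. -/
noncomputable def relEntropy {d : Type*} [Fintype d] [DecidableEq d]
    (ρ σ : Matrix d d ℂ) : ℝ :=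
  ((ρ * (mlog ρ - mlog σ)).trace).re

open Filter Topology

/-- The functional `2 Re tr(ρY) - Re tr(YᴴσY) - t Re tr(YρYᴴ)`, linear in `(ρ, σ)`, whose maximum
over `Y` is the quadratic form of `(L_σ + t R_ρ)⁻¹` at `ρ`. -/
noncomputable def quad {n : ℕ} (ρ σ : Matrix (Fin n) (Fin n) ℂ) (t : ℝ)
    (Y : Matrix (Fin n) (Fin n) ℂ) : ℝ :=
  2 * ((ρ * Y).trace).re - ((Yᴴ * σ * Y).trace).re - t * ((Y * ρ * Yᴴ).trace).re

lemma quad_combination {n : ℕ} (ρ₁ ρ₂ σ₁ σ₂ : Matrix (Fin n) (Fin n) ℂ) (a b t : ℝ)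
    (Y : Matrix (Fin n) (Fin n) ℂ) :
    quad ((a : ℂ) • ρ₁ + (b : ℂ) • ρ₂) ((a : ℂ) • σ₁ + (b : ℂ) • σ₂) t Y =
      a * quad ρ₁ σ₁ t Y + b * quad ρ₂ σ₂ t Y := by
  simp only [quad, Matrix.add_mul, Matrix.mul_add, Matrix.smul_mul, Matrix.mul_smul,
    Matrix.trace_add, Matrix.trace_smul, smul_eq_mul, Complex.add_re, Complex.re_ofReal_mul]
  ring

lemma exists_spectral {n : ℕ} {A : Matrix (Fin n) (Fin n) ℂ} (hA : A.PosDef) :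
    ∃ (U : Matrix (Fin n) (Fin n) ℂ) (r : Fin n → ℝ), Uᴴ * U = 1 ∧ U * Uᴴ = 1 ∧ (∀ i, 0 < r i) ∧
      A = U * diagonal (fun i => (r i : ℂ)) * Uᴴ ∧
      mlog A = U * diagonal (fun i => (Real.log (r i) : ℂ)) * Uᴴ := by
  refine ⟨hA.1.eigenvectorUnitary, hA.1.eigenvalues, ?_, ?_, hA.eigenvalues_pos, ?_, ?_⟩
  · exact Unitary.coe_star_mul_self hA.1.eigenvectorUnitary
  · exact Unitary.coe_mul_star_self hA.1.eigenvectorUnitary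
  · exact hA.1.spectral_theorem
  · rw [mlog, dif_pos hA.1]
    rfl

lemma trace_sandwich {n : ℕ} (U V : Matrix (Fin n) (Fin n) ℂ) (a b : Fin n → ℝ) :
    ((U * diagonal (fun i => (a i : ℂ)) * Uᴴ * (V * diagonal (fun i => (b i : ℂ)) * Vᴴ)).trace).re =
      ∑ i, ∑ j, Complex.normSq ((Uᴴ * V) i j) * (a i * b j) := by
  have h : (U * diagonal (fun i => (a i : ℂ)) * Uᴴ * (V * diagonal (fun i => (b i : ℂ)) * Vᴴ)).trace
      = (diagonal (fun i => (a i : ℂ)) * (Uᴴ * V) *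
          (diagonal (fun i => (b i : ℂ)) * (Uᴴ * V)ᴴ)).trace := by
    rw [conjTranspose_mul, conjTranspose_conjTranspose]
    simp only [Matrix.mul_assoc]
    rw [Matrix.trace_mul_comm]
    simp only [Matrix.mul_assoc]
  rw [h]
  generalize Uᴴ * V = W
  simp only [Matrix.trace, Matrix.diag_apply, Matrix.mul_apply (M := diagonal _ * W),
    Matrix.diagonal_mul, Matrix.conjTranspose_apply, Complex.re_sum]
  refine Finset.sum_congr rfl fun i _ => Finset.sum_congr rfl fun j _ => ?_
  simp [Complex.normSq_apply]
  ring

/-- In the eigenbases of `ρ` and `σ` the functional `quad` decouples into independent scalar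
quadratics in the entries of `Vᴴ Y U`. -/
lemma quad_eigenbasis {n : ℕ} (U V : Matrix (Fin n) (Fin n) ℂ) (r s : Fin n → ℝ)
    (hU : Uᴴ * U = 1) (hV : Vᴴ * V = 1) (t : ℝ) (Z : Matrix (Fin n) (Fin n) ℂ) :
    quad (U * diagonal (fun i => (r i : ℂ)) * Uᴴ) (V * diagonal (fun i => (s i : ℂ)) * Vᴴ) t
        (V * Z * Uᴴ) =
      ∑ i, ∑ j, (2 * r i * ((Uᴴ * V) i j * Z j i).re - (s j + t * r i) * Complex.normSq (Z j i)) := by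
  have h1 : (U * diagonal (fun i => (r i : ℂ)) * Uᴴ * (V * Z * Uᴴ)).trace =
      (diagonal (fun i => (r i : ℂ)) * ((Uᴴ * V) * Z)).trace := by
    rw [← Matrix.mul_assoc _ _ Uᴴ, Matrix.trace_mul_comm]
    simp only [← Matrix.mul_assoc, hU, Matrix.one_mul]
  have h2 : ((V * Z * Uᴴ)ᴴ * (V * diagonal (fun i => (s i : ℂ)) * Vᴴ) * (V * Z * Uᴴ)).trace =
      (Zᴴ * (diagonal (fun i => (s i : ℂ)) * Z)).trace := by
    simp only [conjTranspose_mul, conjTranspose_conjTranspose]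
    rw [← Matrix.mul_assoc _ _ Uᴴ, Matrix.trace_mul_comm]
    have e : Uᴴ * (U * (Zᴴ * Vᴴ) * (V * diagonal (fun i => (s i : ℂ)) * Vᴴ) * (V * Z)) =
      (Uᴴ * U) * Zᴴ * (Vᴴ * V) * diagonal (fun i => (s i : ℂ)) * (Vᴴ * V) * Z := by
      simp only [Matrix.mul_assoc]
    rw [e, hU, hV]
    simp only [Matrix.mul_assoc, Matrix.one_mul]
  have h3 : ((V * Z * Uᴴ) * (U * diagonal (fun i => (r i : ℂ)) * Uᴴ) * (V * Z * Uᴴ)ᴴ).trace =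
      (Z * (diagonal (fun i => (r i : ℂ)) * Zᴴ)).trace := by
    simp only [conjTranspose_mul, conjTranspose_conjTranspose]
    have e : V * Z * Uᴴ * (U * diagonal (fun i => (r i : ℂ)) * Uᴴ) * (U * (Zᴴ * Vᴴ)) =
      V * (Z * (Uᴴ * U) * diagonal (fun i => (r i : ℂ)) * (Uᴴ * U) * Zᴴ * Vᴴ) := by
      simp only [Matrix.mul_assoc]
    rw [e, Matrix.trace_mul_comm, hU]
    simp only [Matrix.mul_assoc, hV, Matrix.mul_one]
  have g1 : ((diagonal (fun i => (r i : ℂ)) * ((Uᴴ * V) * Z)).trace).re =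
      ∑ i, ∑ j, r i * ((Uᴴ * V) i j * Z j i).re := by
    generalize Uᴴ * V = W
    simp only [Matrix.trace, Matrix.diag_apply, Matrix.diagonal_mul, Complex.re_sum,
      Complex.re_ofReal_mul, Matrix.mul_apply (M := W), Finset.mul_sum]
  have g2 : ((Zᴴ * (diagonal (fun i => (s i : ℂ)) * Z)).trace).re =
      ∑ i, ∑ j, s j * Complex.normSq (Z j i) := by
    simp only [Matrix.trace, Matrix.diag_apply, Matrix.mul_apply (M := Zᴴ), Complex.re_sum,
      Matrix.diagonal_mul, Matrix.conjTranspose_apply]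
    refine Finset.sum_congr rfl fun i _ => Finset.sum_congr rfl fun j _ => ?_
    simp [Complex.normSq_apply]
    ring
  have g3 : ((Z * (diagonal (fun i => (r i : ℂ)) * Zᴴ)).trace).re =
      ∑ i, ∑ j, r i * Complex.normSq (Z j i) := by
    simp only [Matrix.trace, Matrix.diag_apply, Matrix.mul_apply (M := Z), Complex.re_sum,
      Matrix.diagonal_mul, Matrix.conjTranspose_apply]
    rw [Finset.sum_comm]
    refine Finset.sum_congr rfl fun i _ => Finset.sum_congr rfl fun j _ => ?_
    simp [Complex.normSq_apply]
    ring
  rw [quad, h1, h2, h3, g1, g2, g3]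
  simp only [Finset.mul_sum, ← Finset.sum_sub_distrib]
  refine Finset.sum_congr rfl fun i _ => Finset.sum_congr rfl fun j _ => ?_
  ring

lemma scalar_quad_le (r c : ℝ) (hc : 0 < c) (w z : ℂ) :
    2 * r * (w * z).re - c * Complex.normSq z ≤ Complex.normSq w * (r ^ 2 / c) := by
  have h : Complex.normSq w * (r ^ 2 / c) - (2 * r * (w * z).re - c * Complex.normSq z) =
      ((r * w.re - c * z.re) ^ 2 + (r * w.im + c * z.im) ^ 2) / c := by
    simp only [Complex.normSq_apply, Complex.mul_re]
    field_simp
    ring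
  have : 0 ≤ ((r * w.re - c * z.re) ^ 2 + (r * w.im + c * z.im) ^ 2) / c := by positivity
  linarith

lemma scalar_quad_eq (r c : ℝ) (hc : 0 < c) (w : ℂ) :
    2 * r * (w * (((r / c : ℝ) : ℂ) * star w)).re -
      c * Complex.normSq (((r / c : ℝ) : ℂ) * star w) = Complex.normSq w * (r ^ 2 / c) := by
  simp only [Complex.normSq_apply, Complex.mul_re, Complex.mul_im, Complex.ofReal_re,
    Complex.ofReal_im, Complex.star_def, Complex.conj_re, Complex.conj_im]
  field_simp
  ring

lemma isGreatest_quad {n : ℕ} (U V : Matrix (Fin n) (Fin n) ℂ) (r s : Fin n → ℝ)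
    (hU : Uᴴ * U = 1) (hU' : U * Uᴴ = 1) (hV : Vᴴ * V = 1) (hV' : V * Vᴴ = 1)
    (hr : ∀ i, 0 < r i) (hs : ∀ i, 0 < s i) (t : ℝ) (ht : 0 ≤ t) :
    IsGreatest (Set.range (quad (U * diagonal (fun i => (r i : ℂ)) * Uᴴ)
        (V * diagonal (fun i => (s i : ℂ)) * Vᴴ) t))
      (∑ i, ∑ j, Complex.normSq ((Uᴴ * V) i j) * (r i ^ 2 / (s j + t * r i))) := by
  have hc : ∀ i j, 0 < s j + t * r i := fun i j =>
    add_pos_of_pos_of_nonneg (hs j) (mul_nonneg ht (hr i).le)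
  constructor
  · -- the maximiser solves `σ Y + t Y ρ = ρ`, entrywise in the eigenbases
    refine ⟨V * (Matrix.of fun j i =>
      ((r i / (s j + t * r i) : ℝ) : ℂ) * star ((Uᴴ * V) i j)) * Uᴴ, ?_⟩
    rw [quad_eigenbasis U V r s hU hV]
    refine Finset.sum_congr rfl fun i _ => Finset.sum_congr rfl fun j _ => ?_
    exact scalar_quad_eq _ _ (hc i j) _
  · rintro _ ⟨Y, rfl⟩
    have hY : Y = V * (Vᴴ * Y * U) * Uᴴ := by
      have e : V * (Vᴴ * Y * U) * Uᴴ = (V * Vᴴ) * Y * (U * Uᴴ) := by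
        simp only [Matrix.mul_assoc]
      rw [e, hU', hV', Matrix.one_mul, Matrix.mul_one]
    rw [hY, quad_eigenbasis U V r s hU hV]
    exact Finset.sum_le_sum fun i _ => Finset.sum_le_sum fun j _ =>
      scalar_quad_le _ _ (hc i j) _ _

/-- The relative entropy in terms of the eigenvalues, weighted by the squared overlaps of the
eigenvectors. -/
lemma relEntropy_eigen {n : ℕ} {ρ σ U V : Matrix (Fin n) (Fin n) ℂ} {r s : Fin n → ℝ}
    (hU : Uᴴ * U = 1) (hV' : V * Vᴴ = 1)
    (hρ : ρ = U * diagonal (fun i => (r i : ℂ)) * Uᴴ)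
    (hlρ : mlog ρ = U * diagonal (fun i => (Real.log (r i) : ℂ)) * Uᴴ)
    (hlσ : mlog σ = V * diagonal (fun i => (Real.log (s i) : ℂ)) * Vᴴ) :
    relEntropy ρ σ = ∑ i, ∑ j, Complex.normSq ((Uᴴ * V) i j) *
      (r i * (Real.log (r i) - Real.log (s j))) := by
  -- `ρ log ρ` is paired with the resolution `V 1 Vᴴ = 1` so that the overlaps appear
  have h1 : ρ * mlog ρ = U * diagonal (fun i => ((r i * Real.log (r i) : ℝ) : ℂ)) * Uᴴ *
      (V * diagonal (fun _ => ((1 : ℝ) : ℂ)) * Vᴴ) := by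
    have e : ρ * mlog ρ = U * (diagonal (fun i => (r i : ℂ)) * (Uᴴ * U) *
        diagonal (fun i => (Real.log (r i) : ℂ))) * Uᴴ := by
      rw [hlρ, hρ]
      simp only [Matrix.mul_assoc]
    rw [e, hU, Matrix.mul_one, diagonal_mul_diagonal]
    simp [hV']
  rw [relEntropy, Matrix.mul_sub, Matrix.trace_sub, Complex.sub_re, h1, trace_sandwich, hlσ, hρ,
    trace_sandwich]
  simp only [← Finset.sum_sub_distrib]
  refine Finset.sum_congr rfl fun i _ => Finset.sum_congr rfl fun j _ => ?_
  ring

lemma trace_eigen {n : ℕ} {ρ U V : Matrix (Fin n) (Fin n) ℂ} {r : Fin n → ℝ}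
    (hV' : V * Vᴴ = 1) (hρ : ρ = U * diagonal (fun i => (r i : ℂ)) * Uᴴ) :
    (ρ.trace).re = ∑ i, ∑ j, Complex.normSq ((Uᴴ * V) i j) * r i := by
  have h := trace_sandwich U V r (fun _ => 1)
  rw [← hρ] at h
  simpa [hV'] using h

lemma tendsto_log_sub_log {r s : ℝ} (hr : 0 < r) (hs : 0 < s) :
    Tendsto (fun T : ℝ => Real.log (s + T * r) - Real.log (1 + T)) atTop (𝓝 (Real.log r)) := by
  -- `(s + T r) / (1 + T) = r + (s - r) / (1 + T)`
  have h1 : Tendsto (fun T : ℝ => r + (s - r) / (1 + T)) atTop (𝓝 (r + 0)) :=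
    tendsto_const_nhds.add
      (tendsto_const_nhds.div_atTop (tendsto_atTop_add_const_left _ _ tendsto_id))
  rw [add_zero] at h1
  refine ((Real.continuousAt_log hr.ne').tendsto.comp h1).congr' ?_
  filter_upwards [eventually_ge_atTop (0 : ℝ)] with T hT
  have h2 : 0 < 1 + T := by linarith
  have h3 : 0 < s + T * r := by positivity
  rw [Function.comp_apply, ← Real.log_div h3.ne' h2.ne']
  congr 1
  field_simp
  ring

/-- `G` is the integral from `0` of the maximum of `quad ρ σ t`; after subtracting the divergent
part, linear in `ρ`, its limit at infinity is the relative entropy. -/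
lemma exists_primitive {n : ℕ} {ρ σ : Matrix (Fin n) (Fin n) ℂ} (hρ : ρ.PosDef) (hσ : σ.PosDef) :
    ∃ G g : ℝ → ℝ, G 0 = 0 ∧ (∀ t, 0 ≤ t → HasDerivAt G (g t) t) ∧
      (∀ t, 0 ≤ t → IsGreatest (Set.range (quad ρ σ t)) (g t)) ∧
      Tendsto (fun T => G T - Real.log (1 + T) * (ρ.trace).re) atTop (𝓝 (relEntropy ρ σ)) := by
  obtain ⟨U, r, hU, hU', hr, eρ, elρ⟩ := exists_spectral hρ
  obtain ⟨V, s, hV, hV', hs, eσ, elσ⟩ := exists_spectral hσ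
  refine ⟨fun T => ∑ i, ∑ j, Complex.normSq ((Uᴴ * V) i j) *
      (r i * (Real.log (s j + T * r i) - Real.log (s j))),
    fun t => ∑ i, ∑ j, Complex.normSq ((Uᴴ * V) i j) * (r i ^ 2 / (s j + t * r i)),
    by simp, fun t ht => ?_, fun t ht => ?_, ?_⟩
  · refine HasDerivAt.fun_sum fun i _ => HasDerivAt.fun_sum fun j _ => HasDerivAt.const_mul _ ?_
    have hc : 0 < s j + t * r i := add_pos_of_pos_of_nonneg (hs j) (mul_nonneg ht (hr i).le)
    have h1 : HasDerivAt (fun T : ℝ => s j + T * r i) (r i) t := by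
      simpa using ((hasDerivAt_id t).mul_const (r i)).const_add (s j)
    have h2 := ((h1.log hc.ne').sub_const (Real.log (s j))).const_mul (r i)
    convert h2 using 1
    ring
  · rw [eρ, eσ]
    exact isGreatest_quad U V r s hU hU' hV hV' hr hs t ht
  · rw [relEntropy_eigen hU hV' eρ elρ elσ, trace_eigen hV' eρ]
    have h : Tendsto (fun T : ℝ => ∑ i, ∑ j, Complex.normSq ((Uᴴ * V) i j) *
        (r i * ((Real.log (s j + T * r i) - Real.log (1 + T)) - Real.log (s j)))) atTop
        (𝓝 (∑ i, ∑ j, Complex.normSq ((Uᴴ * V) i j) *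
          (r i * (Real.log (r i) - Real.log (s j))))) :=
      tendsto_finsetSum _ fun i _ => tendsto_finsetSum _ fun j _ =>
        (((tendsto_log_sub_log (hr i) (hs j)).sub_const _).const_mul _).const_mul _
    refine h.congr fun T => ?_
    simp only [Finset.mul_sum, ← Finset.sum_sub_distrib]
    refine Finset.sum_congr rfl fun i _ => Finset.sum_congr rfl fun j _ => ?_
    ring

lemma posDef_combination {n : ℕ} {A B : Matrix (Fin n) (Fin n) ℂ} (hA : A.PosDef) (hB : B.PosDef)
    {l : ℝ} (hl0 : 0 ≤ l) (hl1 : l ≤ 1) :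
    ((l : ℂ) • A + ((1 - l : ℝ) : ℂ) • B).PosDef := by
  rcases hl0.eq_or_lt with rfl | hl
  · simpa using hB
  · have h1 : (0 : ℂ) < (l : ℂ) := by exact_mod_cast hl
    have h2 : (0 : ℂ) ≤ ((1 - l : ℝ) : ℂ) := by exact_mod_cast sub_nonneg.2 hl1
    exact (hA.smul h1).add_posSemidef (hB.posSemidef.smul h2)

/-- **Joint convexity of the Umegaki relative entropy** on positive definite matrices. -/
theorem relEntropy_jointly_convex {n : ℕ}
    (ρ₁ ρ₂ σ₁ σ₂ : Matrix (Fin n) (Fin n) ℂ)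
    (hρ₁ : ρ₁.PosDef) (hρ₂ : ρ₂.PosDef) (hσ₁ : σ₁.PosDef) (hσ₂ : σ₂.PosDef)
    (l : ℝ) (hl0 : 0 ≤ l) (hl1 : l ≤ 1) :
    relEntropy ((l : ℂ) • ρ₁ + ((1 - l : ℝ) : ℂ) • ρ₂)
        ((l : ℂ) • σ₁ + ((1 - l : ℝ) : ℂ) • σ₂) ≤
      l * relEntropy ρ₁ σ₁ + (1 - l) * relEntropy ρ₂ σ₂ := by
  obtain ⟨G₁, g₁, hG₁, hd₁, hm₁, ht₁⟩ := exists_primitive hρ₁ hσ₁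
  obtain ⟨G₂, g₂, hG₂, hd₂, hm₂, ht₂⟩ := exists_primitive hρ₂ hσ₂
  obtain ⟨G, g, hG, hd, hm, ht⟩ := exists_primitive
    (posDef_combination hρ₁ hρ₂ hl0 hl1) (posDef_combination hσ₁ hσ₂ hl0 hl1)
  -- a maximum of functionals linear in `(ρ, σ)` is convex
  have hg : ∀ t, 0 ≤ t → g t ≤ l * g₁ t + (1 - l) * g₂ t := by
    intro t h0
    obtain ⟨Y, hY⟩ := (hm t h0).1
    rw [← hY, quad_combination]
    exact add_le_add (mul_le_mul_of_nonneg_left ((hm₁ t h0).2 ⟨Y, rfl⟩) hl0)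
      (mul_le_mul_of_nonneg_left ((hm₂ t h0).2 ⟨Y, rfl⟩) (sub_nonneg.2 hl1))
  have hD : ∀ t, 0 ≤ t → HasDerivAt (fun T => l * G₁ T + (1 - l) * G₂ T - G T)
      (l * g₁ t + (1 - l) * g₂ t - g t) t := fun t h0 =>
    (((hd₁ t h0).const_mul l).add ((hd₂ t h0).const_mul (1 - l))).sub (hd t h0)
  have hmono : MonotoneOn (fun T => l * G₁ T + (1 - l) * G₂ T - G T) (Set.Ici 0) := by
    refine monotoneOn_of_deriv_nonneg (convex_Ici 0)
      (fun t h0 => (hD t h0).continuousAt.continuousWithinAt)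
      (fun t h0 => (hD t (interior_subset h0)).differentiableAt.differentiableWithinAt)
      fun t h0 => ?_
    rw [(hD t (interior_subset h0)).deriv]
    linarith [hg t (interior_subset h0)]
  refine le_of_tendsto_of_tendsto ht ((ht₁.const_mul l).add (ht₂.const_mul (1 - l))) ?_
  filter_upwards [eventually_ge_atTop (0 : ℝ)] with T hT
  have h := hmono (Set.mem_Ici.2 le_rfl) (Set.mem_Ici.2 hT) hT
  simp only [hG, hG₁, hG₂] at h
  simp only [Matrix.trace_add, Matrix.trace_smul, smul_eq_mul, Complex.add_re,
    Complex.re_ofReal_mul]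
  linarith
end

section
/- Closed form for the Petz conditional Rényi entropy H̄_α↑: let A, B be nonempty finite types, ρ a positive definite density matrix indexed by A × B, and α ∈ (0,1) ∪ (1,∞). Then for every positive definite density matrix σ indexed by B, −(1/(α−1))·ln(Re tr(ρ^α · (1_A ⊗ σ^{1−α}))) ≤ (α/(1−α))·ln(Re tr((tr_A(ρ^α))^{1/α})), with equality for σ = (tr_A(ρ^α))^{1/α} / tr((tr_A(ρ^α))^{1/α}). Consequently, the supremum of the left-hand side over all positive definite density matrices σ equals the right-hand side. -/
/-! Write `T = tr_A (ρ^α)`, a positive definite matrix, and `S = tr (T^(1/α)) > 0`. Since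
`tr (ρ^α (1 ⊗ X)) = tr (T X)`, everything reduces to comparing `tr (T σ^(1-α))` with `S^α`.

In eigenbases of `T` (eigenvalues `tᵢ`) and `σ` (eigenvalues `sⱼ`), `tr (f(T) g(σ))` equals
`∑ᵢⱼ f(tᵢ) g(sⱼ) pᵢⱼ`, where the overlaps `pᵢⱼ ≥ 0` do not depend on `f` and `g`. A pointwise
inequality between sums of functions of the form `f(t) g(s)` therefore gives the
corresponding trace inequality. It is applied to the weighted Young inequality
`x^α y^(1-α) ≤ α x + (1-α) y` for `α < 1`, and to its reverse for `α > 1` (which is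
Bernoulli's inequality for `x / y`), at `x = tᵢ^(1/α) / S` and `y = sⱼ`. The right-hand side then has trace
`α + (1-α) = 1`, so `tr (T σ^(1-α))` is at most, respectively at least, `S^α`. The sign of
`1/(1-α)` turns both cases into the same upper bound. At `σ = T^(1/α) / S` functional calculus
gives `T σ^(1-α) = S^(α-1) T^(1/α)`, whose trace is `S^α`. -/

open Matrix
open scoped ComplexOrder Kronecker

/-- Real power of a Hermitian matrix via the spectral decomposition (junk value `0`
if the matrix is not Hermitian). Eigenvalue `0` is sent to `0` whenever `c ≠ 0`. -/
noncomputable def mpow {d : Type*} [Fintype d] [DecidableEq d]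
    (M : Matrix d d ℂ) (c : ℝ) : Matrix d d ℂ :=
  if hM : M.IsHermitian then hM.cfc (fun t => t ^ c) else 0

/-- Partial trace over the first factor. -/
noncomputable def ptrA {A B : Type*} [Fintype A]
    (M : Matrix (A × B) (A × B) ℂ) : Matrix B B ℂ :=
  Matrix.of fun b b' => ∑ a : A, M (a, b) (a, b')

/-- The objective `-(1/(α-1))·ln (Re tr (ρ^α (1_A ⊗ σ^(1-α))))` appearing in the
definition of the Petz conditional Rényi entropy `H̄_α↑(A|B)`. -/
noncomputable def petzObj {A B : Type*} [Fintype A] [DecidableEq A]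
    [Fintype B] [DecidableEq B] (α : ℝ)
    (ρ : Matrix (A × B) (A × B) ℂ) (σ : Matrix B B ℂ) : ℝ :=
  -(1 / (α - 1)) * Real.log
    (((mpow ρ α * ((1 : Matrix A A ℂ) ⊗ₖ mpow σ (1 - α))).trace).re)

section Spectral

variable {d : Type*} [Fintype d] [DecidableEq d]

lemma mpow_eq_cfc {M : Matrix d d ℂ} (hM : M.IsHermitian) (c : ℝ) :
    mpow M c = cfc (fun t : ℝ => t ^ c) M := by
  rw [mpow, dif_pos hM, hM.cfc_eq]

/-- The spectrum of a matrix is finite, so every function is continuous on it. -/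
lemma continuousOn_spectrum (M : Matrix d d ℂ) (f : ℝ → ℝ) :
    ContinuousOn f (spectrum ℝ M) :=
  M.finite_real_spectrum.continuousOn f

lemma spectrum_pos {M : Matrix d d ℂ} (hM : M.PosDef) {t : ℝ} (ht : t ∈ spectrum ℝ M) :
    0 < t := by
  rw [hM.1.spectrum_real_eq_range_eigenvalues] at ht
  obtain ⟨i, rfl⟩ := ht
  exact hM.eigenvalues_pos i

lemma posDef_mpow {M : Matrix d d ℂ} (hM : M.PosDef) (c : ℝ) : (mpow M c).PosDef := by
  rw [mpow, dif_pos hM.1, IsHermitian.cfc, Unitary.conjStarAlgAut_apply]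
  rw [Matrix.IsUnit.posDef_star_right_conjugate_iff (Unitary.isUnit_coe)]
  rw [posDef_diagonal_iff]
  intro i
  simpa using Real.rpow_pos_of_pos (hM.eigenvalues_pos i) c

omit [DecidableEq d] in
lemma trace_eq_ofReal {M : Matrix d d ℂ} (hM : M.PosDef) : M.trace = ((M.trace.re : ℝ) : ℂ) := by
  apply Complex.ext
  · simp
  · simpa using (Complex.nonneg_iff.1 hM.posSemidef.trace_nonneg).2.symm

/-- The joint spectral distribution of a pair of Hermitian matrices: the squared overlaps of
their eigenvectors represent all traces `tr (f(M) g(N))` at once. -/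
lemma exists_overlap {M N : Matrix d d ℂ} (hM : M.IsHermitian) (hN : N.IsHermitian) :
    ∃ p : d → d → ℝ, (∀ i j, 0 ≤ p i j) ∧ ∀ f g : ℝ → ℝ,
      (cfc f M * cfc g N).trace.re =
        ∑ i, ∑ j, f (hM.eigenvalues i) * g (hN.eigenvalues j) * p i j := by
  set U := (hM.eigenvectorUnitary : Matrix d d ℂ) with hU
  set V := (hN.eigenvectorUnitary : Matrix d d ℂ) with hV
  refine ⟨fun i j => Complex.normSq ((star U * V) i j), fun i j => Complex.normSq_nonneg _, ?_⟩
  intro f g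
  rw [hM.cfc_eq, hN.cfc_eq, IsHermitian.cfc, IsHermitian.cfc, Unitary.conjStarAlgAut_apply,
    Unitary.conjStarAlgAut_apply, ← hU, ← hV]
  set D : Matrix d d ℂ := diagonal (RCLike.ofReal ∘ f ∘ hM.eigenvalues) with hD
  set E : Matrix d d ℂ := diagonal (RCLike.ofReal ∘ g ∘ hN.eigenvalues) with hE
  have h1 : (U * D * star U * (V * E * star V)).trace
      = ((D * (star U * V)) * (E * star (star U * V))).trace := by
    rw [star_mul, star_star]
    simp only [Matrix.mul_assoc]
    rw [Matrix.trace_mul_comm]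
    simp only [Matrix.mul_assoc]
  rw [h1, Matrix.trace, Complex.re_sum]
  refine Finset.sum_congr rfl fun i _ => ?_
  rw [Matrix.diag_apply, Matrix.mul_apply, Complex.re_sum]
  refine Finset.sum_congr rfl fun j _ => ?_
  rw [hD, hE, Matrix.diagonal_mul, Matrix.diagonal_mul, Matrix.star_apply]
  have h2 : ∀ (x y : ℝ) (w : ℂ), ((x : ℂ) * w * ((y : ℂ) * star w)).re
      = x * y * Complex.normSq w := by
    intro x y w
    simp [Complex.normSq_apply]
    ring
  exact h2 _ _ _

/-- An upper bound of `f x * g y` by a function of `x` plus a function of `y` lifts to traces.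
The two terms on the right are integrals against the overlaps with the other function equal to
`1`, so that the double stochasticity of the overlaps is not needed separately. -/
lemma trace_cfc_mul_le {M N : Matrix d d ℂ} (hM : M.PosDef) (hN : N.PosDef) (f g f' g' : ℝ → ℝ)
    (h : ∀ x y : ℝ, 0 < x → 0 < y → f x * g y ≤ f' x + g' y) :
    (cfc f M * cfc g N).trace.re ≤ (cfc f' M).trace.re + (cfc g' N).trace.re := by
  obtain ⟨p, hp, hF⟩ := exists_overlap hM.1 hN.1
  have e1 : (cfc f' M).trace.re = (cfc f' M * cfc (fun _ : ℝ => (1 : ℝ)) N).trace.re := by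
    rw [cfc_const_one ℝ N (ha := hN.1.isSelfAdjoint), Matrix.mul_one]
  have e2 : (cfc g' N).trace.re = (cfc (fun _ : ℝ => (1 : ℝ)) M * cfc g' N).trace.re := by
    rw [cfc_const_one ℝ M (ha := hM.1.isSelfAdjoint), Matrix.one_mul]
  rw [e1, e2, hF, hF, hF, ← Finset.sum_add_distrib]
  refine Finset.sum_le_sum fun i _ => ?_
  rw [← Finset.sum_add_distrib]
  refine Finset.sum_le_sum fun j _ => ?_
  rw [← add_mul]
  refine mul_le_mul_of_nonneg_right ?_ (hp i j)
  simpa using h _ _ (hM.eigenvalues_pos i) (hN.eigenvalues_pos j)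

/-- With `R = M^(1/2)`, the trace of `M N` is that of the positive definite matrix `R N R`. -/
lemma trace_mul_pos [Nonempty d] {M N : Matrix d d ℂ} (hM : M.PosDef) (hN : N.PosDef) :
    0 < (M * N).trace.re := by
  have hR := posDef_mpow hM (1 / 2)
  have hRR : mpow M (1 / 2) * mpow M (1 / 2) = M := by
    rw [mpow_eq_cfc hM.1, ← cfc_mul _ _ M (continuousOn_spectrum M _) (continuousOn_spectrum M _)]
    nth_rewrite 2 [← cfc_id ℝ M hM.1.isSelfAdjoint]
    refine cfc_congr fun t ht => ?_
    have ht := spectrum_pos hM ht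
    simp only [id]
    rw [← Real.rpow_add ht]
    norm_num
  have h := ((Matrix.IsUnit.posDef_star_right_conjugate_iff hR.isUnit).2 hN).trace_pos
  rw [Matrix.trace_mul_comm, Matrix.star_eq_conjTranspose, hR.1.eq, ← Matrix.mul_assoc, hRR] at h
  exact (Complex.pos_iff.1 h).1

lemma trace_cfc_const_mul (M : Matrix d d ℂ) (c : ℝ) (f : ℝ → ℝ) :
    (cfc (fun x => c * f x) M).trace.re = c * (cfc f M).trace.re := by
  rw [cfc_const_mul c f M (continuousOn_spectrum M f), Matrix.trace_smul, Complex.smul_re,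
    smul_eq_mul]

end Spectral

section Young

lemma young_le {α x y : ℝ} (h0 : 0 < α) (h1 : α < 1) (hx : 0 < x) (hy : 0 < y) :
    x ^ α * y ^ (1 - α) ≤ α * x + (1 - α) * y :=
  Real.geom_mean_le_arith_mean2_weighted h0.le (by linarith) hx.le hy.le (by ring)

lemma young_ge {α x y : ℝ} (h1 : 1 < α) (hx : 0 < x) (hy : 0 < y) :
    α * x + (1 - α) * y ≤ x ^ α * y ^ (1 - α) := by
  have hxy : 0 < x / y := div_pos hx hy
  have h := one_add_mul_self_le_rpow_one_add (s := x / y - 1) (by linarith) h1.le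
  rw [show 1 + (x / y - 1) = x / y by ring, Real.div_rpow hx.le hy.le] at h
  rw [Real.rpow_sub hy, Real.rpow_one]
  have h' := mul_le_mul_of_nonneg_right h hy.le
  calc α * x + (1 - α) * y = (1 + α * (x / y - 1)) * y := by field_simp; ring
    _ ≤ _ := h'
    _ = _ := by ring

/-- At `x = t^(1/α) / S` the left-hand side of Young's inequality is `t s^(1-α) / S^α`. -/
lemma young_subst {α t S s : ℝ} (h0 : 0 < α) (ht : 0 < t) (hS : 0 < S) :
    S ^ α * ((S⁻¹ * t ^ (1 / α)) ^ α * s ^ (1 - α)) = t * s ^ (1 - α) := by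
  have hSα : S ^ α ≠ 0 := (Real.rpow_pos_of_pos hS α).ne'
  rw [Real.mul_rpow (inv_nonneg.2 hS.le) (Real.rpow_nonneg ht.le _), ← Real.rpow_mul ht.le,
    one_div_mul_cancel h0.ne', Real.rpow_one, Real.inv_rpow hS.le]
  field_simp

end Young

section PartialTrace

variable {A B : Type*} [Fintype A] [DecidableEq A] [Fintype B] [DecidableEq B]

/-- The partial trace is adjoint to `X ↦ 1 ⊗ X`. -/
lemma trace_mul_one_kronecker (M : Matrix (A × B) (A × B) ℂ) (X : Matrix B B ℂ) :
    (M * ((1 : Matrix A A ℂ) ⊗ₖ X)).trace = (ptrA M * X).trace := by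
  simp only [Matrix.trace, Matrix.diag_apply, Matrix.mul_apply, Fintype.sum_prod_type,
    kroneckerMap_apply, ptrA, Matrix.of_apply, Matrix.one_apply, ite_mul, one_mul, zero_mul,
    mul_ite, mul_zero, Finset.sum_mul]
  rw [Finset.sum_comm]
  refine Finset.sum_congr rfl fun b _ => ?_
  simpa using Finset.sum_comm

omit [DecidableEq A] [Fintype B] [DecidableEq B] in
lemma posDef_ptrA [Nonempty A] {M : Matrix (A × B) (A × B) ℂ} (hM : M.PosDef) :
    (ptrA M).PosDef := by
  have h : ptrA M = ∑ a : A, M.submatrix (fun b : B => (a, b)) (fun b : B => (a, b)) := by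
    ext b b'
    simp [ptrA, Matrix.sum_apply]
  rw [h]
  exact Matrix.posDef_sum Finset.univ_nonempty
    fun a _ => hM.submatrix (Prod.mk_right_injective a)

end PartialTrace

section Bounds

variable {B : Type*} [Fintype B] [DecidableEq B]

lemma trace_mul_mpow_le [Nonempty B] {T σ : Matrix B B ℂ} (hT : T.PosDef) (hσ : σ.PosDef)
    (hσ1 : σ.trace = 1) {α : ℝ} (h0 : 0 < α) (h1 : α < 1) :
    (T * mpow σ (1 - α)).trace.re ≤ (mpow T (1 / α)).trace.re ^ α := by
  have hS : 0 < (mpow T (1 / α)).trace.re := (Complex.pos_iff.1 (posDef_mpow hT _).trace_pos).1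
  rw [mpow_eq_cfc hσ.1]
  nth_rewrite 1 [← cfc_id ℝ T hT.1.isSelfAdjoint]
  set S := (mpow T (1 / α)).trace.re with hSdef
  refine (trace_cfc_mul_le hT hσ id _
    (fun t => (S ^ α * (α * S⁻¹)) * t ^ (1 / α)) (fun s => (S ^ α * (1 - α)) * id s) ?_).trans
    (le_of_eq ?_)
  · intro t s ht hs
    have := mul_le_mul_of_nonneg_left
      (young_le h0 h1 (mul_pos (inv_pos.2 hS) (Real.rpow_pos_of_pos ht (1 / α))) hs)
      (Real.rpow_nonneg hS.le α)
    rw [young_subst h0 ht hS] at this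
    simp only [id]
    linarith
  · rw [trace_cfc_const_mul, trace_cfc_const_mul, cfc_id ℝ σ hσ.1.isSelfAdjoint, hσ1, ← mpow_eq_cfc hT.1,
      ← hSdef, Complex.one_re]
    field_simp
    ring

lemma le_trace_mul_mpow [Nonempty B] {T σ : Matrix B B ℂ} (hT : T.PosDef) (hσ : σ.PosDef)
    (hσ1 : σ.trace = 1) {α : ℝ} (h1 : 1 < α) :
    (mpow T (1 / α)).trace.re ^ α ≤ (T * mpow σ (1 - α)).trace.re := by
  have h0 : 0 < α := by linarith
  have hS : 0 < (mpow T (1 / α)).trace.re := (Complex.pos_iff.1 (posDef_mpow hT _).trace_pos).1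
  rw [mpow_eq_cfc hσ.1]
  nth_rewrite 2 [← cfc_id ℝ T hT.1.isSelfAdjoint]
  set S := (mpow T (1 / α)).trace.re with hSdef
  -- The one-sided lemma is applied to the negated inequality.
  have key := trace_cfc_mul_le hT hσ (fun t => (-1) * id t) (fun s => s ^ (1 - α))
    (fun t => (-(S ^ α * (α * S⁻¹))) * t ^ (1 / α)) (fun s => (-(S ^ α * (1 - α))) * id s) ?_
  · rw [trace_cfc_const_mul, trace_cfc_const_mul, cfc_id ℝ σ hσ.1.isSelfAdjoint, hσ1, ← mpow_eq_cfc hT.1,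
      ← hSdef, Complex.one_re, cfc_const_mul (-1 : ℝ) id T (continuousOn_spectrum T id),
      smul_mul_assoc, Matrix.trace_smul, Complex.smul_re, smul_eq_mul] at key
    have e : -(S ^ α * (α * S⁻¹)) * S + -(S ^ α * (1 - α)) * 1 = - S ^ α := by
      field_simp
      ring
    linarith
  · intro t s ht hs
    have := mul_le_mul_of_nonneg_left
      (young_ge h1 (mul_pos (inv_pos.2 hS) (Real.rpow_pos_of_pos ht (1 / α))) hs)
      (Real.rpow_nonneg hS.le α)
    rw [young_subst h0 ht hS] at this
    simp only [id]
    linarith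

lemma trace_mul_mpow_optimal {T : Matrix B B ℂ} (hT : T.PosDef) {α S : ℝ} (h0 : 0 < α)
    (hS : 0 < S) (hSdef : (mpow T (1 / α)).trace.re = S) :
    (T * mpow (S⁻¹ • mpow T (1 / α)) (1 - α)).trace.re = S ^ α := by
  have hpd : (S⁻¹ • mpow T (1 / α)).PosDef := (posDef_mpow hT _).smul (inv_pos.2 hS)
  rw [mpow_eq_cfc hpd.1, mpow_eq_cfc hT.1,
    ← cfc_const_mul S⁻¹ _ T (continuousOn_spectrum T _),
    ← cfc_comp' _ _ T ((T.finite_real_spectrum.image _).continuousOn _)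
      (continuousOn_spectrum T _) hT.1.isSelfAdjoint]
  nth_rewrite 1 [← cfc_id ℝ T hT.1.isSelfAdjoint]
  rw [← cfc_mul _ _ T (continuousOn_spectrum T _) (continuousOn_spectrum T _)]
  have hc : (spectrum ℝ T).EqOn (fun t => id t * (S⁻¹ * t ^ (1 / α)) ^ (1 - α))
      (fun t => S ^ (α - 1) * t ^ (1 / α)) := by
    intro t ht
    have ht := spectrum_pos hT ht
    simp only [id]
    rw [Real.mul_rpow (inv_nonneg.2 hS.le) (Real.rpow_nonneg ht.le _), ← Real.rpow_mul ht.le,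
      Real.inv_rpow hS.le, ← Real.rpow_neg hS.le, neg_sub]
    have : t * t ^ (1 / α * (1 - α)) = t ^ (1 / α) := by
      nth_rewrite 1 [← Real.rpow_one t]
      rw [← Real.rpow_add ht]
      congr 1
      field_simp
      ring
    rw [← this]
    ring
  rw [cfc_congr hc, trace_cfc_const_mul, ← mpow_eq_cfc hT.1, hSdef, Real.rpow_sub hS,
    Real.rpow_one]
  field_simp

end Bounds

/-- **Closed form for the Petz conditional Rényi entropy `H̄_α↑`** (Sibson-type identity):
for a positive definite density matrix `ρ` on `A ⊗ B` and `α ∈ (0,1) ∪ (1,∞)`, the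
supremum over positive definite density matrices `σ` of
`-(1/(α-1))·ln (Re tr (ρ^α (1_A ⊗ σ^(1-α))))` is attained at
`σ = (tr_A ρ^α)^(1/α) / tr ((tr_A ρ^α)^(1/α))` and equals
`(α/(1-α))·ln (Re tr ((tr_A ρ^α)^(1/α)))`. -/
theorem petz_up_closed_form {A B : Type*}
    [Fintype A] [DecidableEq A] [Nonempty A]
    [Fintype B] [DecidableEq B] [Nonempty B]
    (ρ : Matrix (A × B) (A × B) ℂ) (hρ : ρ.PosDef) (hρ1 : ρ.trace = 1)
    (α : ℝ) (hα0 : 0 < α) (hα1 : α ≠ 1) :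
    (∀ σ : Matrix B B ℂ, σ.PosDef → σ.trace = 1 →
      petzObj α ρ σ ≤
        (α / (1 - α)) * Real.log (((mpow (ptrA (mpow ρ α)) (1 / α)).trace).re)) ∧
    petzObj α ρ
        (((((mpow (ptrA (mpow ρ α)) (1 / α)).trace).re)⁻¹ : ℂ) •
          mpow (ptrA (mpow ρ α)) (1 / α)) =
      (α / (1 - α)) * Real.log (((mpow (ptrA (mpow ρ α)) (1 / α)).trace).re) ∧
    IsGreatest {x : ℝ | ∃ σ : Matrix B B ℂ, σ.PosDef ∧ σ.trace = 1 ∧ x = petzObj α ρ σ}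
      ((α / (1 - α)) * Real.log (((mpow (ptrA (mpow ρ α)) (1 / α)).trace).re)) := by
  have hT : (ptrA (mpow ρ α)).PosDef := posDef_ptrA (posDef_mpow hρ α)
  have hR := posDef_mpow hT (1 / α)
  have hS : 0 < (mpow (ptrA (mpow ρ α)) (1 / α)).trace.re := (Complex.pos_iff.1 hR.trace_pos).1
  have hobj : ∀ σ, petzObj α ρ σ =
      (1 / (1 - α)) * Real.log ((ptrA (mpow ρ α) * mpow σ (1 - α)).trace.re) := by
    intro σ
    rw [petzObj, trace_mul_one_kronecker, ← neg_sub 1 α, one_div_neg_eq_neg_one_div, neg_neg]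
  have hrhs : ∀ S : ℝ, 0 < S → α / (1 - α) * Real.log S = 1 / (1 - α) * Real.log (S ^ α) := by
    intro S hS
    rw [Real.log_rpow hS]
    ring
  have htr := trace_eq_ofReal hR
  generalize ptrA (mpow ρ α) = T at *
  set S := (mpow T (1 / α)).trace.re with hSdef
  have hbound : ∀ σ : Matrix B B ℂ, σ.PosDef → σ.trace = 1 →
      petzObj α ρ σ ≤ α / (1 - α) * Real.log S := by
    intro σ hσ hσ1
    rw [hobj, hrhs S hS]
    rcases lt_or_gt_of_ne hα1 with h1 | h1
    · refine mul_le_mul_of_nonneg_left ?_ (one_div_nonneg.2 (by linarith))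
      exact Real.log_le_log (trace_mul_pos hT (posDef_mpow hσ _))
        (trace_mul_mpow_le hT hσ hσ1 hα0 h1)
    · refine mul_le_mul_of_nonpos_left ?_ (one_div_nonpos.2 (by linarith))
      exact Real.log_le_log (Real.rpow_pos_of_pos hS α) (le_trace_mul_mpow hT hσ hσ1 h1)
  have hsmul : ((S : ℂ)⁻¹) • mpow T (1 / α) = S⁻¹ • mpow T (1 / α) := by
    rw [← Complex.ofReal_inv, Complex.coe_smul]
  have heq : petzObj α ρ (((S : ℂ)⁻¹) • mpow T (1 / α)) = α / (1 - α) * Real.log S := by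
    rw [hobj, hrhs S hS, hsmul, trace_mul_mpow_optimal hT hα0 hS hSdef.symm]
  refine ⟨hbound, heq, ⟨((S : ℂ)⁻¹) • mpow T (1 / α), ?_, ?_, heq.symm⟩, ?_⟩
  · rw [hsmul]
    exact hR.smul (inv_pos.2 hS)
  · rw [Matrix.trace_smul, htr, smul_eq_mul]
    exact inv_mul_cancel₀ (Complex.ofReal_ne_zero.2 hS.ne')
  · rintro x ⟨σ, hσ, hσ1, rfl⟩
    exact hbound σ hσ hσ1
end
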